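/- arXiv:2401.08215 — 5 statements merged into one kernel-verified Lean document; each statement's English description precedes it below -/
import Mathlib

section
/- Let s_1, ..., s_m be generalized reflections on an n-dimensional vector space V over a field of characteristic 0, with reflection vectors α_1, ..., α_m that are linearly independent. If 0 ≤ d < m, then the intersection over i = 1, ..., m of the λ_i-eigenspaces of s_i acting on Λ^d V is zero (where λ_i ≠ 1 is the eigenvalue of s_i on α_i). -/
open ExteriorAlgebra Module

section Preamble

/-- A linear endomorphism is diagonalizable if its eigenspaces span the whole space. -/
def IsDiagonalizable {F V : Type*} [Field F] [AddCommGroup V] [Module F V]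
    (s : Module.End F V) : Prop :=
  (⨆ μ : F, Module.End.eigenspace s μ) = ⊤

/-- A generalized reflection: a diagonalizable endomorphism with `rank (s - id) = 1`. -/
def IsGenReflection {F V : Type*} [Field F] [AddCommGroup V] [Module F V]
    (s : Module.End F V) : Prop :=
  IsDiagonalizable s ∧ Module.finrank F (LinearMap.range (s - 1)) = 1

/-- A reflection vector of `s`: a nonzero vector in the image of `s - id`. -/
def IsReflVector {F V : Type*} [Field F] [AddCommGroup V] [Module F V]
    (s : Module.End F V) (a : V) : Prop :=
  a ≠ 0 ∧ a ∈ LinearMap.range (s - 1)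

lemma map_mem_exteriorPower {R M N : Type*} [CommRing R] [AddCommGroup M] [Module R M]
    [AddCommGroup N] [Module R N] (d : ℕ) (f : M →ₗ[R] N) {x : ExteriorAlgebra R M}
    (hx : x ∈ ⋀[R]^d M) : ExteriorAlgebra.map f x ∈ ⋀[R]^d N := by
  rw [← ιMulti_span_fixedDegree] at hx ⊢
  induction hx using Submodule.span_induction with
  | mem x hx =>
      obtain ⟨m, rfl⟩ := hx
      rw [map_apply_ιMulti]
      exact Submodule.subset_span ⟨_, rfl⟩
  | zero => simp
  | add x y _ _ hx hy => rw [map_add]; exact Submodule.add_mem _ hx hy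
  | smul c x _ hx => rw [map_smul]; exact Submodule.smul_mem _ _ hx

/-- The linear map induced on `d`-th exterior powers by a linear map. -/
def extMap {R M N : Type*} [CommRing R] [AddCommGroup M] [Module R M]
    [AddCommGroup N] [Module R N] (d : ℕ) (f : M →ₗ[R] N) :
    ⋀[R]^d M →ₗ[R] ⋀[R]^d N :=
  ((ExteriorAlgebra.map f).toLinearMap.domRestrict (⋀[R]^d M)).codRestrict (⋀[R]^d N)
    (fun x => map_mem_exteriorPower d f x.2)

/-- The wedge `v 0 ∧ ⋯ ∧ v (d-1)` as an element of the `d`-th exterior power. -/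
def wedge {R M : Type*} [CommRing R] [AddCommGroup M] [Module R M] (d : ℕ)
    (v : Fin d → M) : ⋀[R]^d M :=
  ⟨ιMulti R d v, ιMulti_range R d (Set.mem_range_self v)⟩

end Preamble

open CliffordAlgebra in
/-- Left contraction by a functional lowers the exterior degree by one. -/
lemma contractLeft_mem_exteriorPower {R M : Type*} [CommRing R] [AddCommGroup M] [Module R M]
    (f : Module.Dual R M) (d : ℕ) {x : ExteriorAlgebra R M} (hx : x ∈ ⋀[R]^(d + 1) M) :
    contractLeft (Q := (0 : QuadraticForm R M)) f x ∈ ⋀[R]^d M := by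
  rw [← ιMulti_span_fixedDegree] at hx
  induction hx using Submodule.span_induction with
  | mem x hx =>
      obtain ⟨v, rfl⟩ := hx
      induction d with
      | zero =>
          rw [ιMulti_succ_apply, contractLeft_ι_mul, ιMulti_zero_apply, contractLeft_one,
            mul_zero, sub_zero]
          exact Submodule.smul_mem _ _ (by simp)
      | succ d ih =>
          rw [ιMulti_succ_apply, contractLeft_ι_mul]
          refine Submodule.sub_mem _ (Submodule.smul_mem _ _ (ιMulti_range R _ ⟨_, rfl⟩)) ?_
          rw [exteriorPower, pow_succ']
          exact Submodule.mul_mem_mul ⟨_, rfl⟩ (ih _)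
  | zero => simp
  | add x y _ _ hx hy => rw [map_add]; exact Submodule.add_mem _ hx hy
  | smul c x _ hx => rw [map_smul]; exact Submodule.smul_mem _ _ hx

open CliffordAlgebra in
/-- The action of `v ↦ v + f v • a` on the exterior algebra. -/
lemma map_eq_add_ι_mul_contractLeft {R M : Type*} [CommRing R] [AddCommGroup M] [Module R M]
    {s : Module.End R M} {f : Module.Dual R M} {a : M} (hs : ∀ v, s v = v + f v • a)
    (x : ExteriorAlgebra R M) :
    ExteriorAlgebra.map s x =
      x + ExteriorAlgebra.ι R a * contractLeft (Q := (0 : QuadraticForm R M)) f x := by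
  induction x using CliffordAlgebra.left_induction with
  | algebraMap r =>
      rw [contractLeft_algebraMap, mul_zero, add_zero]
      exact AlgHom.commutes _ r
  | add x y hx hy => rw [map_add, map_add, hx, hy, mul_add]; abel
  | ι_mul x v hx =>
      have hswap : ExteriorAlgebra.ι R v * ExteriorAlgebra.ι R a =
          -(ExteriorAlgebra.ι R a * ExteriorAlgebra.ι R v) :=
        eq_neg_of_add_eq_zero_left (ExteriorAlgebra.ι_add_mul_swap v a)
      have hsq := ExteriorAlgebra.ι_sq_zero (R := R) a
      rw [contractLeft_ι_mul]
      change ExteriorAlgebra.map s (ExteriorAlgebra.ι R v * x) =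
        ExteriorAlgebra.ι R v * x + ExteriorAlgebra.ι R a *
          (f v • x - ExteriorAlgebra.ι R v * contractLeft (Q := (0 : QuadraticForm R M)) f x)
      rw [map_mul, ExteriorAlgebra.map_apply_ι, hx, hs, map_add, map_smul, add_mul, mul_add,
        mul_add, mul_sub, ← mul_assoc, hswap, smul_mul_assoc, smul_mul_assoc, ← mul_assoc, hsq,
        zero_mul, smul_zero, add_zero, mul_smul_comm, neg_mul, mul_assoc]
      abel

open CliffordAlgebra in
/-- An element of exterior degree `d < m` annihilated by `m` vectors admitting a dual system of
functionals is zero. -/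
lemma eq_zero_of_ι_mul_eq_zero {R M : Type*} [CommRing R] [AddCommGroup M] [Module R M]
    {d m : ℕ} (hd : d < m) (a : Fin m → M) (g : Fin m → Module.Dual R M)
    (hg : ∀ i j, g i (a j) = if i = j then 1 else 0) {x : ExteriorAlgebra R M}
    (hx : x ∈ ⋀[R]^d M) (hax : ∀ i, ExteriorAlgebra.ι R (a i) * x = 0) : x = 0 := by
  induction d generalizing m x with
  | zero =>
      have hx' : x ∈ (1 : Submodule R (ExteriorAlgebra R M)) := by simpa using hx
      obtain ⟨r, rfl⟩ := Submodule.mem_one.mp hx'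
      have h := congrArg (contractLeft (Q := (0 : QuadraticForm R M)) (g ⟨0, hd⟩)) (hax ⟨0, hd⟩)
      erw [contractLeft_ι_mul, contractLeft_algebraMap] at h
      simpa [hg] using h
  | succ d ih =>
      obtain ⟨m, rfl⟩ : ∃ k, m = k + 1 := ⟨m - 1, by omega⟩
      have h (j : Fin (m + 1)) : g 0 (a j) • x =
          ExteriorAlgebra.ι R (a j) * contractLeft (Q := (0 : QuadraticForm R M)) (g 0) x := by
        have h := congrArg (contractLeft (Q := (0 : QuadraticForm R M)) (g 0)) (hax j)
        erw [contractLeft_ι_mul, map_zero] at h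
        exact sub_eq_zero.mp h
      have hy : contractLeft (Q := (0 : QuadraticForm R M)) (g 0) x = 0 := by
        refine ih (m := m) (by omega) (fun i => a i.succ) (fun i => g i.succ)
          (fun i j => by simp [hg]) (contractLeft_mem_exteriorPower _ _ hx) fun i => ?_
        rw [← h, hg, if_neg (Fin.succ_ne_zero i).symm, zero_smul]
      simpa [hg, hy] using h 0

/-- A linearly independent family over a field admits a dual system of functionals. -/
lemma LinearIndependent.exists_dual_system {K V ι : Type*} [Field K] [AddCommGroup V] [Module K V]
    [DecidableEq ι] {a : ι → V} (ha : LinearIndependent K a) :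
    ∃ g : ι → Module.Dual K V, ∀ i j, g i (a j) = if i = j then 1 else 0 := by
  obtain ⟨g, hg⟩ := LinearMap.exists_extend ha.repr
  refine ⟨fun i => Finsupp.lapply i ∘ₗ g, fun i j => ?_⟩
  have h : g (a j) = Finsupp.single j 1 := by
    rw [← ha.repr_eq_single j ⟨a j, Submodule.subset_span ⟨j, rfl⟩⟩ rfl, ← hg]
    rfl
  simp [h, Finsupp.single_apply, eq_comm]

/-- A generalized reflection has the form `v ↦ v + f v • a`, for `a` a reflection vector. -/
lemma IsGenReflection.exists_dual {F V : Type*} [Field F] [AddCommGroup V] [Module F V]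
    {s : Module.End F V} (hs : IsGenReflection s) {a : V} (ha : IsReflVector s a) :
    ∃ f : Module.Dual F V, ∀ v, s v = v + f v • a := by
  obtain ⟨g, hg⟩ := (LinearIndependent.of_subsingleton (v := fun _ : Unit => a) (R := F) ()
    ha.1).exists_dual_system
  have hga : g () a = 1 := by simpa using hg () ()
  refine ⟨g () ∘ₗ (s - 1), fun v => ?_⟩
  obtain ⟨c, hc⟩ := (finrank_eq_one_iff_of_nonzero' (⟨a, ha.2⟩ : LinearMap.range (s - 1))
    (by simpa [Subtype.ext_iff] using ha.1)).mp hs.2 ⟨(s - 1) v, v, rfl⟩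
  have hc' : c • a = (s - 1) v := congrArg Subtype.val hc
  rw [LinearMap.comp_apply, ← hc', map_smul, hga, smul_eq_mul, mul_one, hc']
  simp

/-- If the reflection vectors `α₁, …, α_m` are linearly independent and `d < m`, then the
intersection of the `λᵢ`-eigenspaces of the `sᵢ` on `⋀^d V` is zero. -/
theorem stmt_8 {F V : Type*} [Field F] [CharZero F] [AddCommGroup V] [Module F V]
    [FiniteDimensional F V] (n : ℕ) (hn : Module.finrank F V = n)
    (m : ℕ) (s : Fin m → Module.End F V) (hrefl : ∀ i, IsGenReflection (s i))
    (a : Fin m → V) (ha : ∀ i, IsReflVector (s i) (a i))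
    (lam : Fin m → F) (hlam : ∀ i, lam i ≠ 1) (heig : ∀ i, s i (a i) = lam i • a i)
    (hind : LinearIndependent F a)
    (d : ℕ) (hd : d < m) :
    (⨅ i : Fin m, Module.End.eigenspace (extMap d (s i)) (lam i)) = ⊥ := by
  obtain ⟨g, hg⟩ := hind.exists_dual_system
  rw [eq_bot_iff]
  intro x hx
  refine (Submodule.mem_bot F).mpr (Subtype.ext
    (eq_zero_of_ι_mul_eq_zero hd a g hg x.2 fun i => ?_))
  obtain ⟨f, hf⟩ := (hrefl i).exists_dual (ha i)
  have hxi : ExteriorAlgebra.map (s i) (x : ExteriorAlgebra F V) =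
      lam i • (x : ExteriorAlgebra F V) :=
    congrArg Subtype.val (Module.End.mem_eigenspace_iff.mp ((Submodule.mem_iInf _).mp hx i))
  rw [map_eq_add_ι_mul_contractLeft hf] at hxi
  have h : (lam i - 1) • (x : ExteriorAlgebra F V) = ExteriorAlgebra.ι F (a i) *
      CliffordAlgebra.contractLeft (Q := (0 : QuadraticForm F V)) f x := by
    rw [sub_smul, one_smul, ← hxi, add_sub_cancel_left]
  have h' : (lam i - 1) • (ExteriorAlgebra.ι F (a i) * (x : ExteriorAlgebra F V)) = 0 := by
    rw [← mul_smul_comm, h, ← mul_assoc, ExteriorAlgebra.ι_sq_zero, zero_mul]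
  exact (smul_eq_zero.mp h').resolve_left (sub_ne_zero.mpr (hlam i))
end

section
/- Let s_1, ..., s_m be generalized reflections on an n-dimensional vector space V over a field of characteristic 0, with linearly independent reflection vectors α_1, ..., α_m, extended to a basis {α_1, ..., α_m, v_{m+1}, ..., v_n} of V. If m ≤ d ≤ n, then the intersection over i = 1, ..., m of the λ_i-eigenspaces of s_i on Λ^d V has basis {α_1 ∧ ... ∧ α_m ∧ v_{i_{m+1}} ∧ ... ∧ v_{i_d} : m+1 ≤ i_{m+1} < ... < i_d ≤ n}. In particular, for d = m this intersection is the one-dimensional line spanned by α_1 ∧ ... ∧ α_m. -/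
open ExteriorAlgebra Module

section ExteriorPowerOfReflection

variable {F V : Type*} [Field F] [AddCommGroup V] [Module F V]

/-- A generalized reflection moves every vector along its reflection vector. -/
lemma IsGenReflection.exists_apply_eq_add_smul {s : Module.End F V} (hs : IsGenReflection s)
    {α : V} (hα : IsReflVector s α) (v : V) : ∃ r : F, s v = v + r • α := by
  obtain ⟨r, hr⟩ := exists_smul_eq_of_finrank_eq_one hs.2
    (x := ⟨α, hα.2⟩) (fun h => hα.1 (congrArg Subtype.val h)) ⟨(s - 1) v, v, rfl⟩
  refine ⟨r, ?_⟩
  have h : r • α = s v - v := congrArg Subtype.val hr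
  rw [h, add_sub_cancel]

lemma extMap_eq_exteriorPower_map (d : ℕ) (f : Module.End F V) :
    extMap d f = exteriorPower.map d f := by
  ext v
  rw [LinearMap.compAlternatingMap_apply, LinearMap.compAlternatingMap_apply,
    exteriorPower.map_apply_ιMulti]
  exact ExteriorAlgebra.map_apply_ιMulti f v

variable {I : Type*} [LinearOrder I] {d : ℕ}

/-- If `s v - v` is a multiple of `b i` for every `v`, then the exterior power of `s` fixes the
coordinates at the index sets that do not contain `i`. -/
lemma ιMultiDual_map_of_notMem (b : Basis I F V) {s : Module.End F V} {i : I}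
    (hs : ∀ v, ∃ r : F, s v = v + r • b i) {t : Set.powersetCard I d} (hi : i ∉ t.1)
    (x : ⋀[F]^d V) :
    exteriorPower.ιMultiDual F d b t (exteriorPower.map d s x) =
      exteriorPower.ιMultiDual F d b t x := by
  suffices (exteriorPower.ιMultiDual F d b t).comp (exteriorPower.map d s) =
      exteriorPower.ιMultiDual F d b t from LinearMap.congr_fun this x
  refine exteriorPower.linearMap_ext (AlternatingMap.ext fun v => ?_)
  simp only [LinearMap.compAlternatingMap_apply, LinearMap.comp_apply,
    exteriorPower.map_apply_ιMulti, exteriorPower.ιMultiDual_apply_ιMulti]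
  congr 1
  ext k j
  obtain ⟨r, hr⟩ := hs (v k)
  have hne : Set.powersetCard.ofFinEmbEquiv.symm t j ≠ i := fun h =>
    hi (h ▸ Finset.orderEmbOfFin_mem t.1 t.2 j)
  simp [hr, hne.symm]

/-- If `s v - v` is a multiple of `w k` for every `v` and `s` scales `w k` by `l`, then the
exterior power of `s` scales the wedge of `w` by `l`. -/
lemma exteriorPower_map_ιMulti_eq_smul (b : Basis I F V) {s : Module.End F V} {w : Fin d → V}
    {k : Fin d} (hs : ∀ v, ∃ r : F, s v = v + r • w k) {l : F} (hl : s (w k) = l • w k) :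
    exteriorPower.map d s (exteriorPower.ιMulti F d w) = l • exteriorPower.ιMulti F d w := by
  choose r hr using hs
  refine (b.exteriorPower d).ext_elem fun t => ?_
  rw [map_smul, Finsupp.smul_apply, exteriorPower.basis_repr_apply,
    exteriorPower.basis_repr_apply, exteriorPower.map_apply_ιMulti,
    exteriorPower.ιMultiDual_apply_ιMulti, exteriorPower.ιMultiDual_apply_ιMulti]
  set B : Matrix (Fin d) (Fin d) F :=
    Matrix.of fun i j => b.coord (Set.powersetCard.ofFinEmbEquiv.symm t j) (w i) with hB
  have hrows : (Matrix.of fun i j =>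
      b.coord (Set.powersetCard.ofFinEmbEquiv.symm t j) ((s ∘ w) i)) =
      (Matrix.of fun i j => B i j + Function.update (fun i => r (w i)) k 0 i * B k j).updateRow k
        (l • B k) := by
    ext i j
    rcases eq_or_ne i k with rfl | hik
    · simp [hB, hl]
    · simp [hB, hik, hr (w i)]
  rw [hrows, Matrix.det_updateRow_smul, smul_eq_mul]
  congr 1
  refine Matrix.det_eq_of_forall_row_eq_smul_add_const
    (Function.update (fun i => r (w i)) k 0) k (by simp) fun i j => ?_
  rcases eq_or_ne i k with rfl | hik
  · simp
  · simp [hik]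

/-- The eigenspace, on the exterior power, of a reflection along a basis vector `b i` is spanned
by the basis wedges that involve `b i`. -/
lemma mem_eigenspace_exteriorPower_map_iff (b : Basis I F V) {s : Module.End F V} {i : I}
    (hs : ∀ v, ∃ r : F, s v = v + r • b i) {l : F} (hl : l ≠ 1) (hsi : s (b i) = l • b i)
    (x : ⋀[F]^d V) :
    x ∈ Module.End.eigenspace (exteriorPower.map d s) l ↔
      x ∈ Submodule.span F (b.exteriorPower d '' {t | i ∈ t.1}) := by
  constructor
  · intro hx
    rw [Basis.mem_span_image]
    intro t ht
    by_contra hi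
    rw [Finset.mem_coe, Finsupp.mem_support_iff, exteriorPower.basis_repr_apply] at ht
    have h := ιMultiDual_map_of_notMem b hs hi x
    rw [Module.End.mem_eigenspace_iff.mp hx, map_smul, smul_eq_mul] at h
    exact hl (mul_right_cancel₀ ht (h.trans (one_mul _).symm))
  · intro hx
    refine Submodule.span_le.mpr ?_ hx
    rintro _ ⟨t, ht, rfl⟩
    obtain ⟨k, hk⟩ := (Set.powersetCard.mem_range_ofFinEmbEquiv_symm_iff_mem t i).mpr ht
    rw [SetLike.mem_coe, Module.End.mem_eigenspace_iff, exteriorPower.basis_apply]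
    exact exteriorPower_map_ιMulti_eq_smul b (k := k)
      (by simpa [hk] using hs) (by simpa [hk] using hsi)

end ExteriorPowerOfReflection

/-- If `m ≤ d ≤ n`, the intersection of the `λᵢ`-eigenspaces of the reflections `sᵢ` on
`⋀^d V` has basis the wedges `α₁ ∧ ⋯ ∧ α_m ∧ v_{i_{m+1}} ∧ ⋯ ∧ v_{i_d}`; in particular for
`d = m` it is the one-dimensional line spanned by `α₁ ∧ ⋯ ∧ α_m`. -/
theorem stmt_9 {F V : Type*} [Field F] [CharZero F] [AddCommGroup V] [Module F V]
    [FiniteDimensional F V] (n : ℕ) (hn : Module.finrank F V = n)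
    (m : ℕ) (hmn : m ≤ n) (s : Fin m → Module.End F V) (hrefl : ∀ i, IsGenReflection (s i))
    (a : Fin m → V) (ha : ∀ i, IsReflVector (s i) (a i))
    (lam : Fin m → F) (hlam : ∀ i, lam i ≠ 1) (heig : ∀ i, s i (a i) = lam i • a i)
    (hind : LinearIndependent F a)
    (b : Basis (Fin n) F V) (hb : ∀ i : Fin m, b (Fin.castLE hmn i) = a i)
    (d : ℕ) (hmd : m ≤ d) (hdn : d ≤ n) :
    (∃ c : Basis {t : Finset (Fin n) // t.card = d ∧ ∀ i : Fin m, Fin.castLE hmn i ∈ t} F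
        ↥(⨅ i : Fin m, Module.End.eigenspace (extMap d (s i)) (lam i)),
      ∀ t, (c t).1 = wedge d (fun j => b (t.1.orderIsoOfFin t.prop.1 j))) ∧
    ∀ h : d = m,
      (⨅ i : Fin m, Module.End.eigenspace (extMap d (s i)) (lam i)) =
        Submodule.span F {wedge d (fun j : Fin d => a (Fin.cast h j))} ∧
      Module.finrank F
        ↥(⨅ i : Fin m, Module.End.eigenspace (extMap d (s i)) (lam i)) = 1 := by
  set S := ⨅ i : Fin m, Module.End.eigenspace (extMap d (s i)) (lam i) with hS
  let ι := {t : Finset (Fin n) // t.card = d ∧ ∀ i : Fin m, Fin.castLE hmn i ∈ t}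
  let e : ι → Set.powersetCard (Fin n) d := fun t => ⟨t.1, t.2.1⟩
  have he : Function.Injective e := fun t u h => Subtype.ext (Subtype.mk.inj h)
  have hspan : Submodule.span F (Set.range (b.exteriorPower d ∘ e)) = S := by
    ext x
    have hrange : Set.range e = {t | ∀ i : Fin m, Fin.castLE hmn i ∈ t.1} := by
      ext t
      exact ⟨by rintro ⟨u, rfl⟩; exact u.2.2, fun h => ⟨⟨t.1, t.2, h⟩, rfl⟩⟩
    rw [Set.range_comp, hrange, Basis.mem_span_image, hS, Submodule.mem_iInf]
    simp only [extMap_eq_exteriorPower_map]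
    have key (i : Fin m) := mem_eigenspace_exteriorPower_map_iff (d := d) b
      (i := Fin.castLE hmn i) (by simpa [hb] using (hrefl i).exists_apply_eq_add_smul (ha i))
      (hlam i) (by simpa [hb] using heig i) x
    simp only [key, Basis.mem_span_image]
    exact ⟨fun h i t ht => h ht i, fun h t ht i => h i ht⟩
  let c : Basis ι F S := (Basis.span ((b.exteriorPower d).linearIndependent.comp e he)).map
    (LinearEquiv.ofEq _ _ hspan)
  have hc (t : ι) : (c t).1 = b.exteriorPower d (e t) := by
    simp only [c, Basis.map_apply, LinearEquiv.coe_ofEq_apply, Basis.span_apply,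
      Function.comp_apply]
  have hwedge (t : ι) : b.exteriorPower d (e t) =
      wedge d (fun j => b (t.1.orderIsoOfFin t.prop.1 j)) := by
    rw [exteriorPower.basis_apply]
    rfl
  refine ⟨⟨c, fun t => (hc t).trans (hwedge t)⟩, ?_⟩
  rintro rfl
  let t₀ : ι := ⟨Finset.univ.map (Fin.castLEEmb hmn), by simp, fun i => by simp⟩
  let : Unique ι := ⟨⟨t₀⟩, fun t => Subtype.ext (Finset.eq_of_subset_of_card_le
    (by simpa [t₀, Finset.subset_iff] using t.2.2) (by simp [t₀, t.2.1])).symm⟩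
  refine ⟨?_, by simpa using Module.finrank_eq_card_basis c⟩
  rw [← hspan, Set.range_unique, Function.comp_apply, hwedge]
  congr 3
  funext j
  rw [Fin.cast_eq_self, ← hb j, Finset.coe_orderIsoOfFin_apply]
  have horder := Finset.orderEmbOfFin_unique t₀.2.1 (f := Fin.castLE hmn)
    t₀.2.2 (Fin.strictMono_castLE hmn)
  exact congrArg b (congrFun horder j).symm
end

section
/- Let s_1, ..., s_{m+1} be generalized reflections on a vector space V over a field of characteristic 0, with reflection vectors α_1, ..., α_{m+1} and eigenvalues λ_1, ..., λ_{m+1}. Suppose α_1, ..., α_m are linearly independent, α_{m+1} lies in their span, and m ≤ d. Then the intersection of the λ_i-eigenspaces of s_i on Λ^d V for i = 1, ..., m is nonzero and is contained in the λ_{m+1}-eigenspace of s_{m+1}; hence the intersection over i = 1, ..., m+1 equals the intersection over i = 1, ..., m. -/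
open ExteriorAlgebra Module

namespace ExteriorAlgebra

variable {R M : Type*} [CommRing R] [AddCommGroup M] [Module R M]

lemma ι_mul_ι_mul_comm (a b : M) (x : ExteriorAlgebra R M) :
    ι R a * (ι R b * x) = -(ι R b * (ι R a * x)) := by
  rw [← mul_assoc, ← mul_assoc, ← neg_mul, eq_neg_of_add_eq_zero_left (ι_add_mul_swap a b)]

lemma ι_mul_ι_mul_self (a : M) (x : ExteriorAlgebra R M) : ι R a * (ι R a * x) = 0 := by
  rw [← mul_assoc, ι_sq_zero, zero_mul]

/-- The algebra map induced by `v ↦ v + f v • a`, in terms of contraction with `f`. -/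
lemma map_apply_eq_add_ι_mul_contractLeft {s : Module.End R M} {f : Module.Dual R M} {a : M}
    (hs : ∀ v, s v = v + f v • a) (x : ExteriorAlgebra R M) :
    map s x = x + ι R a * CliffordAlgebra.contractLeft (Q := 0) f x := by
  induction x using CliffordAlgebra.left_induction with
  | algebraMap r =>
    rw [CliffordAlgebra.contractLeft_algebraMap, mul_zero, add_zero]
    exact (map s).commutes r
  | add x y hx hy => rw [map_add, hx, hy, map_add, mul_add]; abel
  | ι_mul x v hx =>
    rw [map_mul, hx, CliffordAlgebra.contractLeft_ι_mul]
    change map s (ι R v) * _ = ι R v * x + ι R a * (_ - ι R v * _)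
    rw [map_apply_ι, hs, map_add, map_smul, mul_add, add_mul, add_mul, mul_sub,
      ι_mul_ι_mul_comm a v, smul_mul_assoc, smul_mul_assoc, ι_mul_ι_mul_self, mul_smul_comm,
      smul_zero]
    abel

/-- The vectors annihilating `x` under left exterior multiplication. -/
def annihilatingVectors (x : ExteriorAlgebra R M) : Submodule R M :=
  LinearMap.ker ((LinearMap.mulRight R x).comp (ι R))

lemma mem_annihilatingVectors {x : ExteriorAlgebra R M} {v : M} :
    v ∈ annihilatingVectors x ↔ ι R v * x = 0 := Iff.rfl

lemma ι_mul_ιMulti_of_mem_range {d : ℕ} {v : Fin d → M} {a : M} (ha : a ∈ Set.range v) :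
    ι R a * ιMulti R d v = 0 := by
  obtain ⟨j, rfl⟩ := ha
  have h := ιMulti_succ_apply (R := R) (Matrix.vecCons (v j) v)
  simp only [Matrix.cons_val_zero] at h
  refine h.symm.trans (ιMulti_eq_zero_of_not_inj fun hinj => ?_)
  exact (Fin.succ_ne_zero j) (hinj (by simp))

end ExteriorAlgebra

lemma wedge_ne_zero {F V : Type*} [Field F] [AddCommGroup V] [Module F V] {d : ℕ}
    {v : Fin d → V} (hv : LinearIndependent F v) : wedge (R := F) d v ≠ 0 := by
  let t : Set.powersetCard (Fin d) d := Set.powersetCard.ofFinEmbEquiv (RelEmbedding.refl _)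
  have h := (exteriorPower.ιMulti_family_linearIndependent_field (n := d) hv).ne_zero t
  rw [exteriorPower.ιMulti_family, Equiv.symm_apply_apply] at h
  exact h

lemma LinearIndependent.exists_fin_range_superset {F V : Type*} [Field F] [AddCommGroup V]
    [Module F V] [FiniteDimensional F V] {m d : ℕ} {a : Fin m → V} (ha : LinearIndependent F a)
    (hmd : m ≤ d) (hd : d ≤ finrank F V) :
    ∃ v : Fin d → V, LinearIndependent F v ∧ Set.range a ⊆ Set.range v := by
  induction d, hmd using Nat.le_induction with
  | base => exact ⟨a, ha, subset_rfl⟩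
  | succ d _ ih =>
    obtain ⟨v, hv, hav⟩ := ih (by lia)
    obtain ⟨x, hx⟩ := exists_linearIndependent_cons_of_lt_finrank hv (by lia)
    refine ⟨_, hx, hav.trans ?_⟩
    rw [Fin.range_cons]
    exact Set.subset_insert x _

lemma IsGenReflection.mem_eigenspace_extMap_iff {F V : Type*} [Field F] [AddCommGroup V]
    [Module F V] {s : Module.End F V} (hs : IsGenReflection s) {a : V} (ha : IsReflVector s a)
    {c : F} (hc : c ≠ 1) (hsa : s a = c • a) {d : ℕ} {x : ⋀[F]^d V} :
    x ∈ Module.End.eigenspace (extMap d s) c ↔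
      a ∈ annihilatingVectors (x : ExteriorAlgebra F V) := by
  obtain ⟨f, hf⟩ := hs.exists_dual ha
  have hmap := map_apply_eq_add_ι_mul_contractLeft hf (x : ExteriorAlgebra F V)
  rw [Module.End.mem_eigenspace_iff, mem_annihilatingVectors, Subtype.ext_iff]
  change map s (x : ExteriorAlgebra F V) = c • (x : ExteriorAlgebra F V) ↔ _
  have hfa : f a = c - 1 := by
    refine smul_left_injective F ha.1 ?_
    change f a • a = (c - 1) • a
    rw [sub_smul, one_smul, ← hsa, hf a, add_sub_cancel_left]
  rw [hmap]
  constructor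
  · intro h
    have h := congrArg (ι F a * ·) h
    simp only [mul_add, ι_mul_ι_mul_self, add_zero, mul_smul_comm] at h
    have h' : (c - 1) • (ι F a * (x : ExteriorAlgebra F V)) = 0 := by
      rw [sub_smul, one_smul, ← h, sub_self]
    exact (smul_eq_zero.1 h').resolve_left (sub_ne_zero.2 hc)
  · intro h
    have hx := CliffordAlgebra.contractLeft_ι_mul (Q := 0) (d := f) a (x : ExteriorAlgebra F V)
    change CliffordAlgebra.contractLeft f (ι F a * _) = _ - ι F a * _ at hx
    rw [h, map_zero] at hx
    rw [← sub_eq_zero.1 hx.symm, hfa, sub_smul, one_smul, add_sub_cancel]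

/-- If `α₁, …, α_m` are linearly independent, `α_{m+1}` lies in their span and `m ≤ d`, then
the intersection of the first `m` eigenspaces on `⋀^d V` is nonzero, is contained in the
`λ_{m+1}`-eigenspace of `s_{m+1}`, and equals the intersection of all `m+1` eigenspaces. -/
theorem stmt_10 {F V : Type*} [Field F] [CharZero F] [AddCommGroup V] [Module F V]
    [FiniteDimensional F V] (n : ℕ) (hn : Module.finrank F V = n)
    (m : ℕ) (s : Fin (m + 1) → Module.End F V) (hrefl : ∀ i, IsGenReflection (s i))
    (a : Fin (m + 1) → V) (ha : ∀ i, IsReflVector (s i) (a i))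
    (lam : Fin (m + 1) → F) (hlam : ∀ i, lam i ≠ 1) (heig : ∀ i, s i (a i) = lam i • a i)
    (hind : LinearIndependent F (fun i : Fin m => a i.castSucc))
    (hspan : a (Fin.last m) ∈ Submodule.span F (Set.range (fun i : Fin m => a i.castSucc)))
    (d : ℕ) (hmd : m ≤ d) (hdn : d ≤ n) :
    (⨅ i : Fin m, Module.End.eigenspace (extMap d (s i.castSucc)) (lam i.castSucc)) ≠ ⊥ ∧
    (⨅ i : Fin m, Module.End.eigenspace (extMap d (s i.castSucc)) (lam i.castSucc)) ≤
      Module.End.eigenspace (extMap d (s (Fin.last m))) (lam (Fin.last m)) ∧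
    (⨅ i : Fin (m + 1), Module.End.eigenspace (extMap d (s i)) (lam i)) =
      (⨅ i : Fin m, Module.End.eigenspace (extMap d (s i.castSucc)) (lam i.castSucc)) := by
  have hmem : ∀ (i : Fin (m + 1)) (x : ⋀[F]^d V),
      x ∈ Module.End.eigenspace (extMap d (s i)) (lam i) ↔
        a i ∈ annihilatingVectors (x : ExteriorAlgebra F V) :=
    fun i _ => (hrefl i).mem_eigenspace_extMap_iff (ha i) (hlam i) (heig i)
  have hle : (⨅ i : Fin m, Module.End.eigenspace (extMap d (s i.castSucc)) (lam i.castSucc)) ≤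
      Module.End.eigenspace (extMap d (s (Fin.last m))) (lam (Fin.last m)) := by
    intro x hx
    simp only [Submodule.mem_iInf, hmem] at hx ⊢
    exact Submodule.span_le.2 (Set.range_subset_iff.2 hx) hspan
  refine ⟨?_, hle, le_antisymm (le_iInf fun i => iInf_le _ i.castSucc) (le_iInf fun i => ?_)⟩
  · obtain ⟨v, hv, hav⟩ := hind.exists_fin_range_superset hmd (hn ▸ hdn)
    refine (Submodule.ne_bot_iff _).2 ⟨wedge d v, ?_, wedge_ne_zero hv⟩
    simp only [Submodule.mem_iInf, hmem]
    exact fun i => ι_mul_ιMulti_of_mem_range (hav ⟨i, rfl⟩)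
  · induction i using Fin.lastCases with
    | last => exact hle
    | cast i => exact iInf_le _ i
end

section
/- Let W be a group with finite generating set S = {s_1, ..., s_k}, and let (V_1, ρ_1), (V_2, ρ_2) be irreducible reflection representations of (W, S) over a field of characteristic 0 of dimensions n_1, n_2. Suppose Λ^{d_1} V_1 ≅ Λ^{d_2} V_2 as W-modules for some 1 ≤ d_ι ≤ n_ι - 1 (ι = 1, 2). Then d_1 = d_2, n_1 = n_2, and for each i, the eigenvalue of ρ_1(s_i) on its reflection vector equals the eigenvalue of ρ_2(s_i) on its reflection vector. -/
open ExteriorAlgebra Module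

/-- If `b` is a basis of eigenvectors of `f`, then the wedges of elements of `b` are eigenvectors of
the map induced by `f` on the exterior power. -/
lemma extMap_exteriorPower_basis {R M ι : Type*} [CommRing R] [AddCommGroup M] [Module R M]
    [LinearOrder ι] (d : ℕ) (f : M →ₗ[R] M) (b : Basis ι R M) (c : ι → R)
    (hf : ∀ i, f (b i) = c i • b i) (t : Set.powersetCard ι d) :
    extMap d f (b.exteriorPower d t) = (∏ i ∈ t.1, c i) • b.exteriorPower d t := by
  rw [exteriorPower.basis_apply]
  apply Subtype.ext
  change ExteriorAlgebra.map f (ιMulti R d (b ∘ Set.powersetCard.ofFinEmbEquiv.symm t)) =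
    (∏ i ∈ t.1, c i) • ιMulti R d (b ∘ Set.powersetCard.ofFinEmbEquiv.symm t)
  have hprod : ∏ i ∈ t.1, c i = ∏ j, c (Set.powersetCard.ofFinEmbEquiv.symm t j) := by
    rw [← Finset.map_orderEmbOfFin_univ t.1 t.2, Finset.prod_map]
    rfl
  rw [map_apply_ιMulti, hprod, ← AlternatingMap.map_smul_univ]
  congr 1
  funext j
  exact hf _

open Polynomial in
lemma charpoly_extMap_of_eigenbasis {F V ι : Type*} [Field F] [AddCommGroup V] [Module F V]
    [FiniteDimensional F V] [LinearOrder ι] [Fintype ι] (d : ℕ) (f : V →ₗ[F] V) (b : Basis ι F V)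
    (c : ι → F) (hf : ∀ i, f (b i) = c i • b i) :
    (extMap d f).charpoly = ∏ t ∈ Finset.univ.powersetCard d, (X - C (∏ i ∈ t, c i)) := by
  classical
  have hdiag : LinearMap.toMatrix (b.exteriorPower d) (b.exteriorPower d) (extMap d f) =
      Matrix.diagonal fun t : Set.powersetCard ι d => ∏ i ∈ t.1, c i := by
    ext t u
    rw [LinearMap.toMatrix_apply, extMap_exteriorPower_basis d f b c hf, map_smul,
      Basis.repr_self, Matrix.diagonal_apply, Finsupp.smul_single, Finsupp.single_apply]
    by_cases h : u = t
    · simp [h]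
    · simp [h, Ne.symm h]
  rw [← LinearMap.charpoly_toMatrix _ (b.exteriorPower d), hdiag, Matrix.charpoly_diagonal]
  exact (Finset.prod_subtype _ (fun t => by simp) fun t => X - C (∏ i ∈ t, c i)).symm

/-- An endomorphism `f` with `rank (f - id) = 1` and an eigenvector of eigenvalue `l ≠ 1` has an
eigenbasis with eigenvalues `l, 1, …, 1`. -/
lemma exists_eigenbasis_of_finrank_range_sub_one {F V : Type*} [Field F] [AddCommGroup V]
    [Module F V] [FiniteDimensional F V] {m : ℕ} (hm : finrank F V = m + 1) {f : End F V}
    (hf : finrank F (LinearMap.range (f - 1)) = 1) {a : V} (ha : a ≠ 0) {l : F} (hl : l ≠ 1)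
    (hfa : f a = l • a) :
    ∃ b : Basis (Fin (m + 1)) F V, ∀ i, f (b i) = (if i = 0 then l else 1) • b i := by
  have hl' : l - 1 ≠ 0 := sub_ne_zero.mpr hl
  have hga : (f - 1) a = (l - 1) • a := by simp [hfa, sub_smul]
  have hker : finrank F (LinearMap.ker (f - 1)) = m := by
    have := LinearMap.finrank_range_add_finrank_ker (f - 1)
    omega
  let y : LinearMap.range (f - 1) := ⟨(f - 1) a, a, rfl⟩
  have hy : y ≠ 0 := by
    intro h
    have h' : (f - 1) a = 0 := congrArg Subtype.val h
    rw [hga] at h'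
    exact (smul_ne_zero hl' ha) h'
  let b₀ : Basis (Fin m) F (LinearMap.ker (f - 1)) := finBasisOfFinrankEq F _ hker
  have hli : ∀ (c : F), ∀ x ∈ LinearMap.ker (f - 1), c • a + x = 0 → c = 0 := by
    intro c x hx h
    have h' := congrArg (f - 1 : End F V) h
    rw [map_add, map_smul, hga, LinearMap.mem_ker.mp hx, map_zero, add_zero] at h'
    simpa [ha, hl'] using h'
  have hsp : ∀ z : V, ∃ c : F, z + c • a ∈ LinearMap.ker (f - 1) := by
    intro z
    obtain ⟨c, hc⟩ := (finrank_eq_one_iff_of_nonzero' y hy).mp hf ⟨(f - 1) z, z, rfl⟩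
    have hc' : c • (f - 1) a = (f - 1) z := congrArg Subtype.val hc
    exact ⟨-c, by rw [LinearMap.mem_ker, map_add, map_smul, ← hc', neg_smul, add_neg_cancel]⟩
  refine ⟨Basis.mkFinCons a b₀ hli hsp, fun i => ?_⟩
  rw [Basis.coe_mkFinCons]
  refine Fin.cases ?_ (fun j => ?_) i
  · simpa using hfa
  · have h := LinearMap.mem_ker.mp (b₀ j).2
    rw [LinearMap.sub_apply, Module.End.one_apply, sub_eq_zero] at h
    simpa using h

open Polynomial in
lemma charpoly_extMap_of_finrank_range_sub_one {F V : Type*} [Field F] [AddCommGroup V]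
    [Module F V] [FiniteDimensional F V] {m : ℕ} (hm : finrank F V = m + 1) {f : End F V}
    (hf : finrank F (LinearMap.range (f - 1)) = 1) {a : V} (ha : a ≠ 0) {l : F} (hl : l ≠ 1)
    (hfa : f a = l • a) (d : ℕ) :
    (extMap (d + 1) f).charpoly =
      (X - C 1) ^ m.choose (d + 1) * (X - C l) ^ m.choose d := by
  obtain ⟨b, hb⟩ := exists_eigenbasis_of_finrank_range_sub_one hm hf ha hl hfa
  have h0 : ∀ t, ∀ n, t ∈ Finset.powersetCard n (Finset.univ.erase (0 : Fin (m + 1))) → 0 ∉ t :=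
    fun t n ht h => Finset.notMem_erase _ _ ((Finset.mem_powersetCard.mp ht).1 h)
  have hcard : (Finset.univ.erase (0 : Fin (m + 1))).card = m := by simp
  rw [charpoly_extMap_of_eigenbasis (d + 1) f b _ hb,
    ← Finset.insert_erase (Finset.mem_univ (0 : Fin (m + 1))),
    Finset.powersetCard_succ_insert (Finset.notMem_erase _ _), Finset.prod_union, Finset.prod_image]
  · congr 1
    · rw [Finset.prod_congr rfl (g := fun _ => X - C (1 : F)), Finset.prod_const,
        Finset.card_powersetCard, hcard]
      intro t ht
      simp [h0 t _ ht]
    · rw [Finset.prod_congr rfl (g := fun _ => X - C l), Finset.prod_const,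
        Finset.card_powersetCard, hcard]
      intro t _
      simp
  · intro t ht u hu htu
    rw [← Finset.erase_insert (h0 t _ ht), htu, Finset.erase_insert (h0 u _ hu)]
  · rw [Finset.disjoint_left]
    intro t ht ht'
    obtain ⟨u, -, rfl⟩ := Finset.mem_image.mp ht'
    exact h0 _ _ ht (Finset.mem_insert_self _ _)

open Polynomial in
lemma roots_X_sub_C_pow_mul {F : Type*} [Field F] (x y : F) (p q : ℕ) :
    ((X - C x) ^ p * (X - C y) ^ q).roots = p • {x} + q • {y} := by
  rw [roots_mul (mul_ne_zero (pow_ne_zero _ (X_sub_C_ne_zero _)) (pow_ne_zero _ (X_sub_C_ne_zero _))),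
    roots_pow, roots_pow, roots_X_sub_C, roots_X_sub_C]

lemma eq_and_eq_of_choose_eq {m₁ m₂ a₁ a₂ : ℕ} (h₁ : a₁ + 1 ≤ m₁) (h₂ : a₂ + 1 ≤ m₂)
    (h : m₁.choose a₁ = m₂.choose a₂) (h' : m₁.choose (a₁ + 1) = m₂.choose (a₂ + 1)) :
    a₁ = a₂ ∧ m₁ = m₂ := by
  wlog hle : a₁ ≤ a₂ generalizing m₁ m₂ a₁ a₂
  · have := this h₂ h₁ h.symm h'.symm (by omega)
    exact ⟨this.1.symm, this.2.symm⟩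
  obtain ⟨q₁, rfl⟩ := Nat.exists_eq_add_of_le h₁
  obtain ⟨q₂, rfl⟩ := Nat.exists_eq_add_of_le h₂
  have hpos : 0 < (a₁ + 1 + q₁).choose a₁ := Nat.choose_pos (by omega)
  have hratio : (q₁ + 1) * (a₂ + 1) = (q₂ + 1) * (a₁ + 1) := by
    have e₁ := Nat.choose_succ_right_eq (a₁ + 1 + q₁) a₁
    have e₂ := Nat.choose_succ_right_eq (a₂ + 1 + q₂) a₂
    rw [show a₁ + 1 + q₁ - a₁ = q₁ + 1 by omega] at e₁
    rw [show a₂ + 1 + q₂ - a₂ = q₂ + 1 by omega, ← h, ← h'] at e₂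
    apply Nat.eq_of_mul_eq_mul_left hpos
    rw [← mul_assoc, ← e₁, ← mul_assoc, ← e₂]
    ring
  rcases hle.eq_or_lt with rfl | hlt
  · have := Nat.eq_of_mul_eq_mul_right (Nat.succ_pos a₁) hratio
    omega
  · exfalso
    have hq : q₁ ≤ q₂ := by nlinarith
    have e₁ := Nat.choose_succ_succ (a₁ + 1 + q₁) a₁
    have e₂ := Nat.choose_succ_succ (a₂ + 1 + q₂) a₂
    have hmono : (a₁ + 1 + q₁ + 1).choose (a₁ + 1) ≤ (a₁ + 1 + q₂ + 1).choose (a₁ + 1) :=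
      Nat.choose_le_choose _ (by omega)
    have hsymm₁ : (a₁ + 1 + q₂ + 1).choose (a₁ + 1) = (a₁ + 1 + q₂ + 1).choose (q₂ + 1) :=
      Nat.choose_symm_of_eq_add (by omega)
    have hsymm₂ : (a₂ + 1 + q₂ + 1).choose (a₂ + 1) = (a₂ + 1 + q₂ + 1).choose (q₂ + 1) :=
      Nat.choose_symm_of_eq_add (by omega)
    have hmono' : (a₁ + 2 + q₂ + 1).choose (q₂ + 1) ≤ (a₂ + 1 + q₂ + 1).choose (q₂ + 1) :=
      Nat.choose_le_choose _ (by omega)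
    have e₃ := Nat.choose_succ_succ (a₁ + 2 + q₂) q₂
    have hpos' : 0 < (a₁ + 2 + q₂).choose q₂ := Nat.choose_pos (by omega)
    rw [show a₁ + 2 + q₂ = a₁ + 1 + q₂ + 1 by omega] at *
    simp only [Nat.succ_eq_add_one] at *
    omega

/-- A representation of dimension at least two of the trivial group is reducible. -/
lemma finrank_le_one_of_subsingleton {F V W : Type*} [Field F] [AddCommGroup V] [Module F V]
    [Nontrivial V] [Group W] [Subsingleton W] (ρ : Representation F W V)
    (hirr : ∀ U : Submodule F V, (∀ w : W, ∀ v ∈ U, ρ w v ∈ U) → U = ⊥ ∨ U = ⊤) :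
    finrank F V ≤ 1 := by
  obtain ⟨v, hv⟩ := exists_ne (0 : V)
  rcases hirr (F ∙ v) fun w x hx => by
    rwa [Subsingleton.elim w 1, map_one, Module.End.one_apply] with h | h
  · exact absurd (Submodule.span_singleton_eq_bot.mp h) hv
  · exact finrank_le_one v fun w => Submodule.mem_span_singleton.mp (h ▸ Submodule.mem_top)

/-- If `⋀^{d₁} V₁ ≅ ⋀^{d₂} V₂` as `W`-modules with `1 ≤ dᵢ ≤ nᵢ - 1`, then `d₁ = d₂`,
`n₁ = n₂`, and the reflection eigenvalues of the generators agree. -/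
theorem stmt_17 {F V₁ V₂ W : Type*} [Field F] [CharZero F]
    [AddCommGroup V₁] [Module F V₁] [FiniteDimensional F V₁] [Nontrivial V₁]
    [AddCommGroup V₂] [Module F V₂] [FiniteDimensional F V₂] [Nontrivial V₂] [Group W]
    (k : ℕ) (s : Fin k → W) (hgen : Subgroup.closure (Set.range s) = ⊤)
    (ρ₁ : Representation F W V₁) (ρ₂ : Representation F W V₂)
    (hirr₁ : ∀ U : Submodule F V₁, (∀ w : W, ∀ v ∈ U, ρ₁ w v ∈ U) → U = ⊥ ∨ U = ⊤)
    (hirr₂ : ∀ U : Submodule F V₂, (∀ w : W, ∀ v ∈ U, ρ₂ w v ∈ U) → U = ⊥ ∨ U = ⊤)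
    (α : Fin k → V₁) (β : Fin k → V₂)
    (hrefl₁ : ∀ i, IsGenReflection (ρ₁ (s i)) ∧ IsReflVector (ρ₁ (s i)) (α i))
    (hrefl₂ : ∀ i, IsGenReflection (ρ₂ (s i)) ∧ IsReflVector (ρ₂ (s i)) (β i))
    (lam mu : Fin k → F)
    (hlam : ∀ i, lam i ≠ 1 ∧ ρ₁ (s i) (α i) = lam i • α i)
    (hmu : ∀ i, mu i ≠ 1 ∧ ρ₂ (s i) (β i) = mu i • β i)
    (n₁ n₂ : ℕ) (hn₁ : Module.finrank F V₁ = n₁) (hn₂ : Module.finrank F V₂ = n₂)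
    (d₁ d₂ : ℕ) (hd₁ : 1 ≤ d₁) (hd₁' : d₁ ≤ n₁ - 1) (hd₂ : 1 ≤ d₂) (hd₂' : d₂ ≤ n₂ - 1)
    (e : ↥(⋀[F]^d₁ V₁) ≃ₗ[F] ↥(⋀[F]^d₂ V₂))
    (he : ∀ (w : W) (x : ↥(⋀[F]^d₁ V₁)), e (extMap d₁ (ρ₁ w) x) = extMap d₂ (ρ₂ w) (e x)) :
    d₁ = d₂ ∧ n₁ = n₂ ∧ ∀ i, lam i = mu i := by
  have hk : Nonempty (Fin k) := by
    by_contra hk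
    rw [not_nonempty_iff] at hk
    rw [Set.range_eq_empty, Subgroup.closure_empty] at hgen
    have : Subsingleton W := subsingleton_of_forall_eq 1 fun w =>
      Subgroup.mem_bot.mp (hgen ▸ Subgroup.mem_top w)
    have := finrank_le_one_of_subsingleton ρ₁ hirr₁
    omega
  obtain ⟨a₁, rfl⟩ := Nat.exists_eq_add_of_le' hd₁
  obtain ⟨a₂, rfl⟩ := Nat.exists_eq_add_of_le' hd₂
  obtain ⟨m₁, rfl⟩ : ∃ m, n₁ = m + 1 := ⟨n₁ - 1, by omega⟩
  obtain ⟨m₂, rfl⟩ : ∃ m, n₂ = m + 1 := ⟨n₂ - 1, by omega⟩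
  rw [Nat.add_sub_cancel] at hd₁' hd₂'
  have hroots : ∀ i, m₁.choose (a₁ + 1) • ({1} : Multiset F) + m₁.choose a₁ • {lam i} =
      m₂.choose (a₂ + 1) • {1} + m₂.choose a₂ • {mu i} := by
    intro i
    have hconj : e.conj (extMap (a₁ + 1) (ρ₁ (s i))) = extMap (a₂ + 1) (ρ₂ (s i)) := by
      refine LinearMap.ext fun x => ?_
      rw [LinearEquiv.conj_apply_apply, he, LinearEquiv.apply_symm_apply]
    have hchar := LinearEquiv.charpoly_conj e (extMap (a₁ + 1) (ρ₁ (s i)))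
    rw [hconj, charpoly_extMap_of_finrank_range_sub_one hn₁ (hrefl₁ i).1.2 (hrefl₁ i).2.1
      (hlam i).1 (hlam i).2, charpoly_extMap_of_finrank_range_sub_one hn₂ (hrefl₂ i).1.2
      (hrefl₂ i).2.1 (hmu i).1 (hmu i).2] at hchar
    rw [← roots_X_sub_C_pow_mul, ← roots_X_sub_C_pow_mul, hchar]
  have heig : ∀ i, lam i = mu i := by
    classical
    intro i
    have hmem : lam i ∈ m₁.choose (a₁ + 1) • ({1} : Multiset F) + m₁.choose a₁ • {lam i} := by
      rw [Multiset.mem_add]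
      exact Or.inr (Multiset.mem_nsmul.mpr
        ⟨(Nat.choose_pos (by omega)).ne', Multiset.mem_singleton_self _⟩)
    rw [hroots i, Multiset.mem_add] at hmem
    rcases hmem with h | h
    · exact absurd (Multiset.mem_singleton.mp (Multiset.mem_of_mem_nsmul h)) (hlam i).1
    · exact Multiset.mem_singleton.mp (Multiset.mem_of_mem_nsmul h)
  obtain ⟨i⟩ := hk
  have hone : m₁.choose (a₁ + 1) = m₂.choose (a₂ + 1) := by
    classical
    simpa [(hlam i).1.symm, (hmu i).1.symm, Multiset.count_singleton] using
      congrArg (Multiset.count 1) (hroots i)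
  have hcard : m₁.choose a₁ = m₂.choose a₂ := by
    have := congrArg Multiset.card (hroots i)
    simpa [hone] using this
  obtain ⟨rfl, rfl⟩ := eq_and_eq_of_choose_eq hd₁' hd₂' hcard hone
  exact ⟨rfl, rfl, heig⟩
end

section
/- Let W be a group with finite generating set S, and (V_1, ρ_1), (V_2, ρ_2) irreducible reflection representations of (W, S) over a field of characteristic 0 with reflection vectors α_i in V_1 and β_i in V_2. Suppose Λ^d V_1 ≅ Λ^d V_2 as W-modules with 2 ≤ d ≤ dim V_1 - 1 = dim V_2 - 1. If α_{j_1}, ..., α_{j_{d+1}} are linearly independent in V_1, then β_{j_1}, ..., β_{j_{d+1}} are linearly independent in V_2. -/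
open ExteriorAlgebra Module

section ExteriorAlgebra

variable {F V : Type*} [Field F] [AddCommGroup V] [Module F V]

/-- Left contraction of the exterior algebra by a linear form. -/
def contract (f : Dual F V) : ExteriorAlgebra F V →ₗ[F] ExteriorAlgebra F V :=
  CliffordAlgebra.contractLeft f

lemma contract_ι_mul (f : Dual F V) (v : V) (x : ExteriorAlgebra F V) :
    contract f (ι F v * x) = f v • x - ι F v * contract f x :=
  CliffordAlgebra.contractLeft_ι_mul f v x

lemma contract_algebraMap (f : Dual F V) (r : F) :
    contract f (algebraMap F (ExteriorAlgebra F V) r) = 0 :=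
  CliffordAlgebra.contractLeft_algebraMap 0 f r

lemma contract_mem_exteriorPower (f : Dual F V) (n : ℕ) {x : ExteriorAlgebra F V}
    (hx : x ∈ ⋀[F]^(n + 1) V) : contract f x ∈ ⋀[F]^n V := by
  induction n generalizing x with
  | zero =>
    change x ∈ LinearMap.range (ι F) ^ (0 + 1) at hx
    rw [zero_add, pow_one] at hx
    obtain ⟨v, rfl⟩ := hx
    rw [← mul_one (ι F v), contract_ι_mul, ← map_one (algebraMap F (ExteriorAlgebra F V)),
      contract_algebraMap, mul_zero, sub_zero, map_one, ← Algebra.algebraMap_eq_smul_one]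
    exact Submodule.algebraMap_mem _
  | succ n ih =>
    change x ∈ LinearMap.range (ι F) ^ (n + 1 + 1) at hx
    rw [pow_succ'] at hx
    induction hx using Submodule.mul_induction_on' with
    | mem_mul_mem v hv y hy =>
      obtain ⟨v, rfl⟩ := hv
      rw [contract_ι_mul]
      refine Submodule.sub_mem _ (Submodule.smul_mem _ _ hy) ?_
      change _ ∈ LinearMap.range (ι F) ^ (n + 1)
      rw [pow_succ']
      exact Submodule.mul_mem_mul (LinearMap.mem_range_self _ v) (ih hy)
    | add x _ y _ hx hy => rw [map_add]; exact Submodule.add_mem _ hx hy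

/-- A transvection or reflection `v ↦ v + f v • a` acts on the exterior algebra by
`x ↦ x + a ∧ (f ⌋ x)`. -/
lemma map_apply_eq_add_ι_mul_contract {t : V →ₗ[F] V} {f : Dual F V} {a : V}
    (ht : ∀ v, t v = v + f v • a) (x : ExteriorAlgebra F V) :
    ExteriorAlgebra.map t x = x + ι F a * contract f x := by
  induction x using CliffordAlgebra.left_induction with
  | algebraMap r => rw [contract_algebraMap, mul_zero, add_zero, AlgHom.commutes]
  | add x y hx hy => rw [map_add, hx, hy, map_add, mul_add]; abel
  | ι_mul x v hx =>
    change ExteriorAlgebra.map t (ι F v * x) = ι F v * x + ι F a * contract f (ι F v * x)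
    have hanti : ι F a * ι F v = -(ι F v * ι F a) :=
      eq_neg_of_add_eq_zero_left (ι_add_mul_swap a v)
    rw [map_mul, map_apply_ι, hx, contract_ι_mul, ht, map_add, map_smul, add_mul, mul_add,
      mul_add, mul_sub, ← mul_assoc (ι F a) (ι F v), hanti, smul_mul_assoc, smul_mul_assoc,
      ← mul_assoc (ι F a) (ι F a), ι_sq_zero, zero_mul, smul_zero, mul_smul_comm, neg_mul,
      mul_assoc]
    abel

lemma map_apply_of_ι_mul_eq_zero {t : V →ₗ[F] V} {f : Dual F V} {a : V}
    (ht : ∀ v, t v = v + f v • a) {x : ExteriorAlgebra F V} (hx : ι F a * x = 0) :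
    ExteriorAlgebra.map t x = (1 + f a) • x := by
  have h := contract_ι_mul f a x
  rw [hx, map_zero, eq_comm, sub_eq_zero] at h
  rw [map_apply_eq_add_ι_mul_contract ht, ← h, add_smul, one_smul]

lemma ι_mul_eq_zero_of_map_apply {t : V →ₗ[F] V} {f : Dual F V} {a : V}
    (ht : ∀ v, t v = v + f v • a) {x : ExteriorAlgebra F V} {c : F} (hc : c ≠ 0)
    (hx : ExteriorAlgebra.map t x = (1 + c) • x) : ι F a * x = 0 := by
  rw [map_apply_eq_add_ι_mul_contract ht, add_smul, one_smul, add_right_inj] at hx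
  have h : ι F a * (c • x) = 0 := by rw [← hx, ← mul_assoc, ι_sq_zero, zero_mul]
  rw [mul_smul_comm] at h
  exact (smul_eq_zero.mp h).resolve_left hc

lemma eq_zero_of_forall_ι_mul_eq_zero_of_dual (n : ℕ) (a : Fin (n + 1) → V)
    (g : Fin (n + 1) → Dual F V) (hg : ∀ i l, g i (a l) = if i = l then 1 else 0)
    {x : ExteriorAlgebra F V} (hx : x ∈ ⋀[F]^n V) (hax : ∀ i, ι F (a i) * x = 0) : x = 0 := by
  have hkey : x = ι F (a 0) * contract (g 0) x := by
    have h := contract_ι_mul (g 0) (a 0) x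
    rw [hax, map_zero, hg, if_pos rfl, one_smul] at h
    exact (sub_eq_zero.mp h.symm)
  have hcontract : contract (g 0) x = 0 := by
    cases n with
    | zero =>
      change x ∈ LinearMap.range (ι F) ^ 0 at hx
      rw [pow_zero, Submodule.mem_one] at hx
      obtain ⟨r, rfl⟩ := hx
      exact contract_algebraMap _ r
    | succ n =>
      refine eq_zero_of_forall_ι_mul_eq_zero_of_dual n (fun i => a i.succ) (fun i => g i.succ)
        (fun i l => by simp [hg]) (contract_mem_exteriorPower _ _ hx) fun i => ?_
      have h := contract_ι_mul (g 0) (a i.succ) x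
      rw [hax, map_zero, hg, if_neg (Fin.succ_ne_zero i).symm, zero_smul, zero_sub] at h
      exact neg_eq_zero.mp h.symm
  rw [hkey, hcontract, mul_zero]

lemma LinearIndependent.exists_dual_family {ι' : Type*} [DecidableEq ι'] {a : ι' → V}
    (ha : LinearIndependent F a) :
    ∃ g : ι' → Dual F V, ∀ i l, g i (a l) = if i = l then 1 else 0 := by
  let b := Basis.span ha
  choose g hg using fun i => LinearMap.exists_extend (b.coord i)
  refine ⟨g, fun i l => ?_⟩
  have h := LinearMap.congr_fun (hg i) (b l)
  simpa [b, Basis.span_apply, Finsupp.single_apply, eq_comm] using h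

/-- A homogeneous element of degree `n` annihilated by `n + 1` linearly independent vectors
vanishes. -/
lemma eq_zero_of_forall_ι_mul_eq_zero {n : ℕ} {a : Fin (n + 1) → V}
    (ha : LinearIndependent F a) {x : ExteriorAlgebra F V} (hx : x ∈ ⋀[F]^n V)
    (hax : ∀ i, ι F (a i) * x = 0) : x = 0 := by
  obtain ⟨g, hg⟩ := ha.exists_dual_family
  exact eq_zero_of_forall_ι_mul_eq_zero_of_dual n a g hg hx hax

lemma ιMulti_ne_zero {n : ℕ} {u : Fin n → V} (hu : LinearIndependent F u) :
    ιMulti F n u ≠ 0 := by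
  intro h0
  have hli := exteriorPower.ιMulti_family_linearIndependent_field (n := n) hu
  let S : Set.powersetCard (Fin n) n := ⟨Finset.univ, by simp⟩
  apply hli.ne_zero S
  have hS : u ∘ Set.powersetCard.ofFinEmbEquiv.symm S = u := by
    rw [(Set.powersetCard.ofFinEmbEquiv.symm S).strictMono.eq_id, Function.comp_id]
  apply Subtype.ext
  change ιMulti F n (u ∘ Set.powersetCard.ofFinEmbEquiv.symm S) = 0
  rw [hS, h0]

lemma ι_mul_ιMulti_eq_zero {n : ℕ} {u : Fin n → V} {v : V}
    (hv : v ∈ Submodule.span F (Set.range u)) : ι F v * ιMulti F n u = 0 := by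
  induction hv using Submodule.span_induction with
  | mem v hv =>
    obtain ⟨i, rfl⟩ := hv
    have h := ιMulti_succ_apply (R := F) (Fin.cons (u i) u : Fin (n + 1) → V)
    simp only [Fin.cons_zero, Matrix.vecTail, Function.comp_def, Fin.cons_succ] at h
    rw [← h]
    exact (ιMulti F (n + 1)).map_eq_zero_of_eq _ (i := 0) (j := i.succ) (by simp)
      (Fin.succ_ne_zero i).symm
  | zero => rw [map_zero, zero_mul]
  | add v w _ _ hv hw => rw [map_add, add_mul, hv, hw, add_zero]
  | smul c v _ hv => rw [map_smul, smul_mul_assoc, hv, smul_zero]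

lemma exists_linearIndependent_of_finrank_span_le [FiniteDimensional F V] {κ : Type*}
    (b : κ → V) {n : ℕ} (hb : finrank F (Submodule.span F (Set.range b)) ≤ n)
    (hn : n ≤ finrank F V) :
    ∃ u : Fin n → V, LinearIndependent F u ∧ ∀ l, b l ∈ Submodule.span F (Set.range u) := by
  classical
  obtain ⟨t, -, htspan, htli⟩ := exists_linearIndependent F (Set.range b)
  replace htli : LinearIndepOn F id t := htli
  let B := Basis.extend htli
  have : Finite (htli.extend (Set.subset_univ t)) := Module.Finite.finite_basis B
  obtain ⟨E, hE⟩ := Set.Finite.exists_finset_coe (Set.toFinite (htli.extend (Set.subset_univ t)))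
  have hsub := htli.subset_extend (Set.subset_univ t)
  obtain ⟨T, hT⟩ := Set.Finite.exists_finset_coe ((Set.toFinite _).subset hsub)
  have hTE : T ⊆ E := by rw [← Finset.coe_subset, hE, hT]; exact hsub
  have hTcard : T.card ≤ n := by
    rw [← hT] at htli htspan
    rw [← htspan] at hb
    have := finrank_span_finset_eq_card htli
    omega
  have hEcard : n ≤ E.card := by
    rw [finrank_eq_nat_card_basis B, ← hE] at hn
    simpa using hn
  obtain ⟨U, hTU, hUE, hU⟩ := Finset.exists_subsuperset_card_eq hTE hTcard hEcard
  have hUli : LinearIndependent F ((↑) : U → V) := by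
    have h := htli.linearIndepOn_extend (Set.subset_univ t)
    exact LinearIndepOn.mono h (by rw [← hE]; exact_mod_cast hUE)
  refine ⟨fun i => ((U.equivFinOfCardEq hU).symm i : V), hUli.comp _ (Equiv.injective _), ?_⟩
  intro l
  have hr : Set.range (fun i => ((U.equivFinOfCardEq hU).symm i : V)) = U := by
    have := (U.equivFinOfCardEq hU).symm.surjective.range_comp ((↑) : U → V)
    simpa [Function.comp_def] using this
  rw [hr]
  have h : b l ∈ Submodule.span F t := htspan ▸ Submodule.subset_span ⟨l, rfl⟩
  refine Submodule.span_mono ?_ h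
  rw [← hT]; exact_mod_cast hTU

end ExteriorAlgebra

section Reflection

variable {F V : Type*} [Field F] [AddCommGroup V] [Module F V]

lemma exists_dual_of_finrank_range_eq_one {t : End F V} {a : V}
    (ht : finrank F (LinearMap.range (t - 1)) = 1) (ha : IsReflVector t a) :
    ∃ f : Dual F V, ∀ v, t v = v + f v • a := by
  have hr : ∀ v, (t - 1) v ∈ Submodule.span F {a} := by
    intro v
    obtain ⟨c, hc⟩ := (finrank_eq_one_iff_of_nonzero' (⟨a, ha.2⟩ : LinearMap.range (t - 1))
      (by simpa [Subtype.ext_iff] using ha.1)).mp ht ⟨(t - 1) v, LinearMap.mem_range_self _ v⟩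
    exact Submodule.mem_span_singleton.mpr ⟨c, congrArg Subtype.val hc⟩
  refine ⟨(LinearEquiv.toSpanNonzeroSingleton F V a ha.1).symm.toLinearMap ∘ₗ
    (t - 1).codRestrict _ hr, fun v => ?_⟩
  have h := LinearEquiv.toSpanNonzeroSingleton_symm_apply_smul F V a ha.1
    ((t - 1).codRestrict _ hr v)
  rw [LinearMap.comp_apply, LinearEquiv.coe_coe, h]
  simp

lemma IsDiagonalizable.eq_one_of_sq_eq_zero {t : End F V} (ht : IsDiagonalizable t)
    (hsq : ∀ v, (t - 1) ((t - 1) v) = 0) : t = 1 := by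
  rw [← sub_eq_zero, ← LinearMap.ker_eq_top, eq_top_iff, ← ht, iSup_le_iff]
  intro μ v hv
  have hv' : (t - 1) v = (μ - 1) • v := by
    rw [LinearMap.sub_apply, End.mem_eigenspace_iff.mp hv, sub_smul, one_smul, End.one_apply]
  have h := hsq v
  rw [hv', map_smul, hv', smul_eq_zero, smul_eq_zero] at h
  rw [LinearMap.mem_ker, hv', smul_eq_zero]
  tauto

lemma IsGenReflection.exists_dual_s18 {t : End F V} {a : V} (ht : IsGenReflection t)
    (ha : IsReflVector t a) : ∃ f : Dual F V, f a ≠ 0 ∧ ∀ v, t v = v + f v • a := by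
  obtain ⟨f, hf⟩ := exists_dual_of_finrank_range_eq_one ht.2 ha
  refine ⟨f, fun h0 => ?_, hf⟩
  have h1 : t = 1 := ht.1.eq_one_of_sq_eq_zero fun v => by simp [hf, h0]
  obtain ⟨v, hv⟩ := ha.2
  exact ha.1 (by rw [← hv, h1, sub_self, LinearMap.zero_apply])

end Reflection

/-- Under an isomorphism `⋀^d V₁ ≅ ⋀^d V₂` (`2 ≤ d ≤ dim V₁ - 1 = dim V₂ - 1`), linear
independence of `d+1` reflection vectors in `V₁` implies that of the corresponding ones
in `V₂`. -/
theorem stmt_18 {F V₁ V₂ W : Type*} [Field F] [CharZero F]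
    [AddCommGroup V₁] [Module F V₁] [FiniteDimensional F V₁] [Nontrivial V₁]
    [AddCommGroup V₂] [Module F V₂] [FiniteDimensional F V₂] [Nontrivial V₂] [Group W]
    (k : ℕ) (s : Fin k → W) (hgen : Subgroup.closure (Set.range s) = ⊤)
    (ρ₁ : Representation F W V₁) (ρ₂ : Representation F W V₂)
    (hirr₁ : ∀ U : Submodule F V₁, (∀ w : W, ∀ v ∈ U, ρ₁ w v ∈ U) → U = ⊥ ∨ U = ⊤)
    (hirr₂ : ∀ U : Submodule F V₂, (∀ w : W, ∀ v ∈ U, ρ₂ w v ∈ U) → U = ⊥ ∨ U = ⊤)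
    (α : Fin k → V₁) (β : Fin k → V₂)
    (hrefl₁ : ∀ i, IsGenReflection (ρ₁ (s i)) ∧ IsReflVector (ρ₁ (s i)) (α i))
    (hrefl₂ : ∀ i, IsGenReflection (ρ₂ (s i)) ∧ IsReflVector (ρ₂ (s i)) (β i))
    (d : ℕ) (hd2 : 2 ≤ d) (hd : d ≤ Module.finrank F V₁ - 1)
    (hdim : Module.finrank F V₁ - 1 = Module.finrank F V₂ - 1)
    (e : ↥(⋀[F]^d V₁) ≃ₗ[F] ↥(⋀[F]^d V₂))
    (he : ∀ (w : W) (x : ↥(⋀[F]^d V₁)), e (extMap d (ρ₁ w) x) = extMap d (ρ₂ w) (e x))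
    (j : Fin (d + 1) → Fin k)
    (hind : LinearIndependent F (fun l => α (j l))) :
    LinearIndependent F (fun l => β (j l)) := by
  by_contra hdep
  have hspan : finrank F (Submodule.span F (Set.range fun l => β (j l))) ≤ d := by
    have hle := finrank_range_le_card (R := F) (fun l => β (j l))
    have hne := mt linearIndependent_iff_card_eq_finrank_span.mpr hdep
    rw [Set.finrank] at hle hne
    rw [Fintype.card_fin] at hle hne
    omega
  obtain ⟨u, hu, hβu⟩ := exists_linearIndependent_of_finrank_span_le _ hspan (by omega)
  let x := e.symm (wedge d u)
  suffices hx : (x : ExteriorAlgebra F V₁) = 0 by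
    have hw : wedge d u = 0 := e.symm.map_eq_zero_iff.mp (Subtype.ext hx)
    exact ιMulti_ne_zero hu (congrArg Subtype.val hw)
  refine eq_zero_of_forall_ι_mul_eq_zero hind x.2 fun l => ?_
  obtain ⟨f, -, hf⟩ := (hrefl₁ (j l)).1.exists_dual_s18 (hrefl₁ (j l)).2
  obtain ⟨g, hg0, hg⟩ := (hrefl₂ (j l)).1.exists_dual_s18 (hrefl₂ (j l)).2
  refine ι_mul_eq_zero_of_map_apply hf hg0 ?_
  have hwedge : extMap d (ρ₂ (s (j l))) (wedge d u) = (1 + g (β (j l))) • wedge d u :=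
    Subtype.ext (map_apply_of_ι_mul_eq_zero hg (ι_mul_ιMulti_eq_zero (hβu l)))
  have hx : extMap d (ρ₁ (s (j l))) x = (1 + g (β (j l))) • x := by
    apply e.injective
    rw [he, map_smul, e.apply_symm_apply, hwedge]
  exact congrArg Subtype.val hx
end
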